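/- Let $k$ be an algebraically closed field of characteristic $2$, let $d \ge 1$, and let $B = k[[x_0,\dots,x_d]]$ be the formal power series ring with maximal ideal $\mathfrak m_B = (x_0,\dots,x_d)$. Let $J \subseteq B$ be the ideal generated by $x_2,\dots,x_d$ (so $J = 0$ if $d = 1$). Let $Q$ be a homogeneous polynomial of degree $2$ over $k$ in the variables $x_2,\dots,x_d$, that is, a $k$-linear combination of the monomials $x_ix_j$ with $2 \le i \le j \le d$, and let $G \in \mathfrak m_B^3$. 1. If $F = x_0x_1 + Q + G$, then there exist units $a_0, b_1$ of $B$, elements $a_1, b_0 \in \mathfrak m_B$, elements $a_2, b_2 \in J$, and $G_1 \in J^3$ such that $$F = (a_0x_0 + a_1x_1 + a_2)(b_0x_0 + b_1x_1 + b_2) + Q + G_1.$$ 2. If $F = x_0^2 + x_0x_1 + x_1^2 + Q + G$ (which is the form that $x_0x_1 + Q + G'$, with $G' \in \mathfrak m_B^3$, takes after a suitable invertible $k$-linear change of the variables $x_0, x_1$), then there exist units $a_0, a_1, b_0, b_1$ of $B$, elements $a_2, b_2 \in J$, and $G_1 \in J^3$ such that $$F = (a_0x_0 + a_1x_1 + a_2)(b_0x_0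 + b_1x_1 + b_2) + Q + G_1.$$ -/

import Mathlib

open MvPowerSeries

namespace CompletingSquares

/-- The maximal ideal `𝔪_B = (x_0,…,x_d)` of `B = k[[x_0,…,x_d]]`. -/
noncomputable def maxIdeal (k : Type*) [Field k] (d : ℕ) : Ideal (MvPowerSeries (Fin (d + 1)) k) :=
  Ideal.span (Set.range (X : Fin (d + 1) → MvPowerSeries (Fin (d + 1)) k))

/-- The ideal `J = (x_2,…,x_d)` of `B = k[[x_0,…,x_d]]` (it is zero if `d = 1`). -/
noncomputable def idealJ (k : Type*) [Field k] (d : ℕ) : Ideal (MvPowerSeries (Fin (d + 1)) k) :=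
  Ideal.span {f | ∃ i : Fin (d + 1), 2 ≤ (i : ℕ) ∧ f = X i}

/-- The quadratic forms over `k` in `x_2,…,x_d`: the `k`-linear combinations in `B` of the
monomials `x_i x_j` with `i, j ≥ 2`. -/
noncomputable def quadraticForms (k : Type*) [Field k] (d : ℕ) :
    Submodule k (MvPowerSeries (Fin (d + 1)) k) :=
  Submodule.span k {f | ∃ i j : Fin (d + 1), 2 ≤ (i : ℕ) ∧ 2 ≤ (j : ℕ) ∧ f = X i * X j}

end CompletingSquares

open Finsupp

namespace CompletingSquares

section PowerSeries

variable {σ R : Type*} [CommRing R]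

/-- The ideal of power series all of whose monomials have degree at least `n`. -/
def orderIdeal (σ R : Type*) [CommRing R] (n : ℕ) : Ideal (MvPowerSeries σ R) where
  carrier := {f | (n : ℕ∞) ≤ f.order}
  zero_mem' := by simp
  add_mem' hf hg := (le_min hf hg).trans min_order_le_add
  smul_mem' c f hf := hf.trans (le_add_self.trans le_order_mul)

theorem mem_orderIdeal {n : ℕ} {f : MvPowerSeries σ R} :
    f ∈ orderIdeal σ R n ↔ ∀ e : σ →₀ ℕ, e.degree < n → coeff e f = 0 :=
  ⟨fun h _ he => coeff_of_lt_order (lt_of_lt_of_le (by exact_mod_cast he) h),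
    fun h => nat_le_order h⟩

theorem orderIdeal_anti {m n : ℕ} (h : m ≤ n) : orderIdeal σ R n ≤ orderIdeal σ R m :=
  fun _ hf => mem_orderIdeal.2 fun e he => mem_orderIdeal.1 hf e (he.trans_le h)

theorem mul_mem_orderIdeal {m n : ℕ} {f g : MvPowerSeries σ R} (hf : f ∈ orderIdeal σ R m)
    (hg : g ∈ orderIdeal σ R n) : f * g ∈ orderIdeal σ R (m + n) := by
  change ((m + n : ℕ) : ℕ∞) ≤ _
  push_cast
  exact (add_le_add hf hg).trans le_order_mul

theorem constantCoeff_eq_zero_of_mem_orderIdeal {n : ℕ} (hn : 0 < n) {f : MvPowerSeries σ R}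
    (hf : f ∈ orderIdeal σ R n) : constantCoeff f = 0 := by
  rw [← coeff_zero_eq_constantCoeff_apply]
  exact mem_orderIdeal.1 hf 0 (by simpa using hn)

theorem eq_of_forall_sub_mem_orderIdeal {f g : MvPowerSeries σ R}
    (h : ∀ n, f - g ∈ orderIdeal σ R n) : f = g := by
  ext e
  have := mem_orderIdeal.1 (h (e.degree + 1)) e (Nat.lt_succ_self _)
  rwa [map_sub, sub_eq_zero] at this

/-- A self-map of `orderIdeal σ R m` that is contracting for the degree filtration has a
fixed point. -/
theorem exists_fixedPoint_of_contracting {m : ℕ} (Φ : MvPowerSeries σ R → MvPowerSeries σ R)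
    (hΦ : ∀ f ∈ orderIdeal σ R m, Φ f ∈ orderIdeal σ R m)
    (hc : ∀ n, ∀ f ∈ orderIdeal σ R m, ∀ g ∈ orderIdeal σ R m,
      f - g ∈ orderIdeal σ R n → Φ f - Φ g ∈ orderIdeal σ R (n + 1)) :
    ∃ w ∈ orderIdeal σ R m, Φ w = w := by
  have hmem : ∀ n, Φ^[n] 0 ∈ orderIdeal σ R m := fun n => by
    induction n with
    | zero => exact zero_mem _
    | succ n ih => rw [Function.iterate_succ_apply']; exact hΦ _ ih
  have hstep : ∀ n, Φ^[n + 1] 0 - Φ^[n] 0 ∈ orderIdeal σ R n := fun n => by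
    induction n with
    | zero => exact mem_orderIdeal.2 fun e he => absurd he (Nat.not_lt_zero _)
    | succ n ih =>
      rw [Function.iterate_succ_apply' Φ (n + 1), Function.iterate_succ_apply' Φ n]
      rw [Function.iterate_succ_apply' Φ n] at ih
      refine hc n _ ?_ _ (hmem n) ih
      exact hΦ _ (hmem n)
  have hcauchy : ∀ n j, Φ^[n + j] 0 - Φ^[n] 0 ∈ orderIdeal σ R n := fun n j => by
    induction j with
    | zero => simp
    | succ j ih =>
      have := add_mem (orderIdeal_anti (Nat.le_add_right n j) (hstep (n + j))) ih
      rwa [sub_add_sub_cancel] at this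
  let w : MvPowerSeries σ R := fun e => coeff e (Φ^[e.degree + 1] 0)
  have hw : ∀ e, coeff e w = coeff e (Φ^[e.degree + 1] 0) := fun _ => rfl
  have hlim : ∀ n, w - Φ^[n] 0 ∈ orderIdeal σ R n := fun n => mem_orderIdeal.2 fun e he => by
    obtain ⟨j, rfl⟩ := Nat.exists_eq_add_of_le (Nat.succ_le_of_lt he)
    have := mem_orderIdeal.1 (hcauchy (e.degree + 1) j) e (Nat.lt_succ_self _)
    rw [map_sub, sub_eq_zero] at this
    rw [map_sub, hw, sub_eq_zero]
    exact this.symm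
  have hwm : w ∈ orderIdeal σ R m := mem_orderIdeal.2 fun e he => by
    rw [hw]; exact mem_orderIdeal.1 (hmem _) e he
  refine ⟨w, hwm, eq_of_forall_sub_mem_orderIdeal fun n => ?_⟩
  have h₁ := orderIdeal_anti n.le_succ (hc n w hwm _ (hmem n) (hlim n))
  have h₂ := orderIdeal_anti n.le_succ (hlim (n + 1))
  rw [Function.iterate_succ_apply'] at h₂
  have := sub_mem h₁ h₂
  rwa [sub_sub_sub_cancel_right] at this

/-- If `E₀` and `E₁` lower the order by at most one, then `w + E₀ w * E₁ w = G` can be solved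
for `w` of order at least three whenever `G` has order at least three. -/
theorem exists_add_mul_eq (E₀ E₁ : MvPowerSeries σ R →ₗ[R] MvPowerSeries σ R)
    (h₀ : ∀ n, ∀ f ∈ orderIdeal σ R (n + 1), E₀ f ∈ orderIdeal σ R n)
    (h₁ : ∀ n, ∀ f ∈ orderIdeal σ R (n + 1), E₁ f ∈ orderIdeal σ R n)
    {G : MvPowerSeries σ R} (hG : G ∈ orderIdeal σ R 3) :
    ∃ w ∈ orderIdeal σ R 3, w + E₀ w * E₁ w = G := by
  have hmul : ∀ f ∈ orderIdeal σ R 3, E₀ f * E₁ f ∈ orderIdeal σ R 4 := fun f hf =>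
    mul_mem_orderIdeal (h₀ 2 f hf) (h₁ 2 f hf)
  obtain ⟨w, hw, hfix⟩ := exists_fixedPoint_of_contracting (m := 3)
    (fun f => G - E₀ f * E₁ f)
    (fun f hf => sub_mem hG (orderIdeal_anti (by norm_num) (hmul f hf)))
    (fun n f hf g hg hfg => by
      rw [sub_sub_sub_cancel_left]
      cases n with
      | zero => exact orderIdeal_anti (by norm_num) (sub_mem (hmul g hg) (hmul f hf))
      | succ n =>
        have hgf : g - f ∈ orderIdeal σ R (n + 1) := by
          rw [← neg_sub]; exact neg_mem hfg
        have a := mul_mem_orderIdeal (h₀ n _ hgf) (h₁ 2 f hf)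
        have b := mul_mem_orderIdeal (h₀ 2 g hg) (h₁ n _ hgf)
        rw [add_comm] at b
        convert add_mem a b using 1
        rw [map_sub, map_sub]
        ring)
  exact ⟨w, hw, (sub_eq_iff_eq_add.1 hfix).symm⟩

/-- The quotient in the division of a power series by the variable `X i`. -/
noncomputable def divVar (i : σ) : MvPowerSeries σ R →ₗ[R] MvPowerSeries σ R where
  toFun f := fun e => coeff (e + single i 1) f
  map_add' _ _ := rfl
  map_smul' _ _ := rfl

open Classical in
/-- The remainder in the division of a power series by the variable `X i`: the part of the series
that does not involve `X i`. -/
noncomputable def modVar (i : σ) : MvPowerSeries σ R →ₗ[R] MvPowerSeries σ R where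
  toFun f := fun e => if e i = 0 then coeff e f else 0
  map_add' f g := by
    ext e
    change (if e i = 0 then coeff e (f + g) else 0) =
      (if e i = 0 then coeff e f else 0) + (if e i = 0 then coeff e g else 0)
    split_ifs <;> simp
  map_smul' c f := by
    ext e
    change (if e i = 0 then coeff e (c • f) else 0) = c * (if e i = 0 then coeff e f else 0)
    split_ifs <;> simp

theorem coeff_divVar (i : σ) (f : MvPowerSeries σ R) (e : σ →₀ ℕ) :
    coeff e (divVar i f) = coeff (e + single i 1) f := rfl

open Classical in
theorem coeff_modVar (i : σ) (f : MvPowerSeries σ R) (e : σ →₀ ℕ) :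
    coeff e (modVar i f) = if e i = 0 then coeff e f else 0 := rfl

theorem X_mul_divVar_add_modVar (i : σ) (f : MvPowerSeries σ R) :
    X i * divVar i f + modVar i f = f := by
  classical
  ext e
  have hle : single i 1 ≤ e ↔ e i ≠ 0 := by
    rw [single_le_iff, Nat.one_le_iff_ne_zero]
  rw [map_add, X_def, coeff_monomial_mul, coeff_divVar, coeff_modVar]
  by_cases h : e i = 0
  · rw [if_neg (by simpa [hle] using h), if_pos h, zero_add]
  · rw [if_pos (hle.2 h), if_neg h, tsub_add_cancel_of_le (hle.2 h), one_mul, add_zero]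

theorem divVar_mem_orderIdeal (i : σ) (n : ℕ) (f : MvPowerSeries σ R)
    (hf : f ∈ orderIdeal σ R (n + 1)) : divVar i f ∈ orderIdeal σ R n :=
  mem_orderIdeal.2 fun e he => by
    rw [coeff_divVar]
    exact mem_orderIdeal.1 hf _ (by simpa using he)

theorem modVar_mem_orderIdeal (i : σ) (n : ℕ) (f : MvPowerSeries σ R)
    (hf : f ∈ orderIdeal σ R n) : modVar i f ∈ orderIdeal σ R n :=
  mem_orderIdeal.2 fun e he => by
    classical
    rw [coeff_modVar, mem_orderIdeal.1 hf _ he, ite_self]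

/-- A power series all of whose monomials have degree at least `n` in the variables from `s` lies
in the `n`-th power of the ideal generated by these variables. -/
theorem mem_span_X_pow (n : ℕ) (s : Finset σ) (f : MvPowerSeries σ R)
    (hf : ∀ e : σ →₀ ℕ, ∑ i ∈ s, e i < n → coeff e f = 0) :
    f ∈ Ideal.span ((X : σ → MvPowerSeries σ R) '' s) ^ n := by
  classical
  induction n generalizing s f with
  | zero => simp
  | succ n ihn =>
    induction s using Finset.induction_on generalizing f with
    | empty =>
      have : f = 0 := by
        ext e
        exact hf e (by simp)
      rw [this]
      exact zero_mem _
    | insert a t ha ih =>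
      rw [← X_mul_divVar_add_modVar a f]
      refine add_mem ?_ ?_
      · rw [pow_succ']
        refine Ideal.mul_mem_mul (Ideal.subset_span ⟨a, by simp, rfl⟩) (ihn _ _ fun e he => ?_)
        rw [coeff_divVar]
        apply hf
        have h₁ : ∑ i ∈ insert a t, single a 1 i = 1 := by
          simp [Finsupp.single_apply]
        simp only [Finsupp.add_apply, Finset.sum_add_distrib, h₁]
        omega
      · refine Ideal.pow_right_mono (Ideal.span_mono (Set.image_mono ?_)) (n + 1) (ih _ ?_)
        · simp
        · intro e he
          rw [coeff_modVar]
          split_ifs with h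
          · apply hf
            rwa [Finset.sum_insert ha, h, zero_add]
          · rfl

end PowerSeries

variable {k : Type*} [Field k] {d : ℕ}

theorem maxIdeal_pow_le (n : ℕ) : maxIdeal k d ^ n ≤ orderIdeal (Fin (d + 1)) k n := by
  induction n with
  | zero => exact fun f _ => mem_orderIdeal.2 fun e he => absurd he (Nat.not_lt_zero _)
  | succ n ih =>
    rw [pow_succ, Ideal.mul_le]
    intro f hf g hg
    refine mul_mem_orderIdeal (ih hf) ?_
    have : maxIdeal k d ≤ orderIdeal (Fin (d + 1)) k 1 := by
      refine Ideal.span_le.2 ?_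
      rintro _ ⟨i, rfl⟩
      refine mem_orderIdeal.2 fun e he => ?_
      have : e = 0 := (degree_eq_zero_iff e).1 (by omega)
      rw [this, coeff_zero_X]
    exact this hg

theorem mem_maxIdeal_of_mem_orderIdeal {f : MvPowerSeries (Fin (d + 1)) k}
    (hf : f ∈ orderIdeal (Fin (d + 1)) k 1) : f ∈ maxIdeal k d := by
  have := mem_span_X_pow 1 Finset.univ f fun e he => mem_orderIdeal.1 hf e
    (by rwa [degree_eq_sum])
  rwa [pow_one, Finset.coe_univ, Set.image_univ] at this

section Decomposition

variable (i₀ i₁ : Fin (d + 1))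

/-- The part of a power series that does not involve the variables `X i₀` and `X i₁` is of degree
at least `n` in the other variables if the series has order at least `n`. -/
theorem modVar_modVar_mem_idealJ_pow (h₀ : (i₀ : ℕ) = 0) (h₁ : (i₁ : ℕ) = 1) (n : ℕ)
    {f : MvPowerSeries (Fin (d + 1)) k} (hf : f ∈ orderIdeal (Fin (d + 1)) k n) :
    modVar i₁ (modVar i₀ f) ∈ idealJ k d ^ n := by
  classical
  have hJ : Ideal.span ((X : Fin (d + 1) → MvPowerSeries (Fin (d + 1)) k) ''
      (Finset.univ.filter fun i : Fin (d + 1) => 2 ≤ (i : ℕ))) = idealJ k d := by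
    rw [idealJ]
    congr 1
    ext f
    simp [eq_comm]
  rw [← hJ]
  refine mem_span_X_pow n _ _ fun e he => ?_
  rw [coeff_modVar, coeff_modVar]
  split_ifs with e₁ e₀
  · refine mem_orderIdeal.1 hf e ?_
    rw [degree_eq_sum]
    refine lt_of_le_of_lt (le_of_eq ?_) he
    refine (Finset.sum_filter_of_ne fun i _ hi => ?_).symm
    by_contra hlt
    have : i = i₀ ∨ i = i₁ := by
      simp only [Fin.ext_iff]
      omega
    rcases this with rfl | rfl <;> contradiction
  · rfl
  · rfl

theorem X_mul_add_X_mul_add_modVar (f : MvPowerSeries (Fin (d + 1)) k) :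
    X i₀ * divVar i₀ f + X i₁ * divVar i₁ (modVar i₀ f) + modVar i₁ (modVar i₀ f) = f := by
  rw [add_assoc, X_mul_divVar_add_modVar, X_mul_divVar_add_modVar]

/-- A power series of order at least two is a combination of `X i₀` and `X i₁` with coefficients
in the maximal ideal, up to an element of `J`. -/
theorem exists_eq_of_mem_orderIdeal_two (h₀ : (i₀ : ℕ) = 0) (h₁ : (i₁ : ℕ) = 1)
    {f : MvPowerSeries (Fin (d + 1)) k} (hf : f ∈ orderIdeal (Fin (d + 1)) k 2) :
    ∃ p ∈ orderIdeal (Fin (d + 1)) k 1, ∃ q ∈ orderIdeal (Fin (d + 1)) k 1, ∃ r ∈ idealJ k d,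
      f = p * X i₀ + q * X i₁ + r := by
  refine ⟨divVar i₀ f, divVar_mem_orderIdeal i₀ 1 f hf, divVar i₁ (modVar i₀ f),
    divVar_mem_orderIdeal i₁ 1 _ (modVar_mem_orderIdeal i₀ 2 f hf), modVar i₁ (modVar i₀ f), ?_, ?_⟩
  · have := modVar_modVar_mem_idealJ_pow i₀ i₁ h₀ h₁ 1 (orderIdeal_anti (by norm_num) hf)
    rwa [pow_one] at this
  · conv_lhs => rw [← X_mul_add_X_mul_add_modVar i₀ i₁ f]
    ring

/-- If the variables `X i₀` and `X i₁` are the linear combinations `α L + β M` and `γ L + δ M` of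
`L` and `M`, then `L M + G` with `G` of order at least three is a product of perturbations
of `L` and `M` of order at least two, up to an element of `J³`. -/
theorem exists_factorization (h₀ : (i₀ : ℕ) = 0) (h₁ : (i₁ : ℕ) = 1)
    {G L M : MvPowerSeries (Fin (d + 1)) k} {α β γ δ : k}
    (hX₀ : X i₀ = α • L + β • M) (hX₁ : X i₁ = γ • L + δ • M)
    (hG : G ∈ orderIdeal (Fin (d + 1)) k 3) :
    ∃ u ∈ orderIdeal (Fin (d + 1)) k 2, ∃ v ∈ orderIdeal (Fin (d + 1)) k 2,
      ∃ G₁ ∈ idealJ k d ^ 3, L * M + G = (L + u) * (M + v) + G₁ := by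
  have hE : ∀ (a b : k) (n : ℕ), ∀ f ∈ orderIdeal (Fin (d + 1)) k (n + 1),
      (a • divVar i₀ + b • (divVar i₁ ∘ₗ modVar i₀) : MvPowerSeries (Fin (d + 1)) k →ₗ[k]
        MvPowerSeries (Fin (d + 1)) k) f ∈ orderIdeal (Fin (d + 1)) k n := by
    intro a b n f hf
    refine add_mem (Submodule.smul_of_tower_mem _ a (divVar_mem_orderIdeal i₀ n f hf))
      (Submodule.smul_of_tower_mem _ b
        (divVar_mem_orderIdeal i₁ n _ (modVar_mem_orderIdeal i₀ (n + 1) f hf)))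
  obtain ⟨w, hw, rfl⟩ := exists_add_mul_eq _ _ (hE α γ) (hE β δ) hG
  refine ⟨_, hE β δ 2 w hw, _, hE α γ 2 w hw, modVar i₁ (modVar i₀ w),
    modVar_modVar_mem_idealJ_pow i₀ i₁ h₀ h₁ 3 hw, ?_⟩
  have hdec := X_mul_add_X_mul_add_modVar i₀ i₁ w
  rw [hX₀, hX₁] at hdec
  simp only [LinearMap.add_apply, LinearMap.smul_apply, LinearMap.comp_apply,
    MvPowerSeries.smul_eq_C_mul] at hdec ⊢
  linear_combination -hdec

end Decomposition

theorem isUnit_add_of_mem_orderIdeal {f p : MvPowerSeries (Fin (d + 1)) k}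
    (hf : constantCoeff f ≠ 0) (hp : p ∈ orderIdeal (Fin (d + 1)) k 1) : IsUnit (f + p) := by
  rw [MvPowerSeries.isUnit_iff_constantCoeff, map_add,
    constantCoeff_eq_zero_of_mem_orderIdeal one_pos hp, add_zero]
  exact hf.isUnit

theorem exists_sq_add_self_add_one_eq_zero (k : Type*) [Field k] [IsAlgClosed k] :
    ∃ ω : k, ω ^ 2 + ω + 1 = 0 := by
  have hdeg : (Polynomial.X ^ 2 + Polynomial.X + 1 : Polynomial k).degree = 2 := by
    compute_degree!
  obtain ⟨ω, hω⟩ := IsAlgClosed.exists_root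
    (Polynomial.X ^ 2 + Polynomial.X + 1 : Polynomial k) (by rw [hdeg]; norm_num)
  exact ⟨ω, by simpa [Polynomial.IsRoot] using hω⟩

end CompletingSquares

open CompletingSquares in
/-- Completing squares in characteristic 2. Let `Q` be a quadratic form in `x_2,…,x_d` and
`G ∈ 𝔪_B³`.
First part: `x_0x_1 + Q + G = (a_0x_0 + a_1x_1 + a_2)(b_0x_0 + b_1x_1 + b_2) + Q + G_1` with
`a_0, b_1` units, `a_1, b_0 ∈ 𝔪_B`, `a_2, b_2 ∈ J` and `G_1 ∈ J³`.
Second part: if `x_0x_1` is replaced by the linearly equivalent form `x_0² + x_0x_1 + x_1²`,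
there is such an expression in which `a_0, a_1, b_0, b_1` are all units. -/
theorem completing_squares_char_two (k : Type*) [Field k] [IsAlgClosed k] [CharP k 2]
    (d : ℕ) (hd : 1 ≤ d) (x₀ x₁ Q G : MvPowerSeries (Fin (d + 1)) k)
    (hx₀ : x₀ = X (⟨0, Nat.succ_pos d⟩ : Fin (d + 1)))
    (hx₁ : x₁ = X (⟨1, Nat.lt_succ_of_le hd⟩ : Fin (d + 1)))
    (hQ : Q ∈ CompletingSquares.quadraticForms k d)
    (hG : G ∈ CompletingSquares.maxIdeal k d ^ 3) :
    (∃ a₀ a₁ a₂ b₀ b₁ b₂ G₁ : MvPowerSeries (Fin (d + 1)) k,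
      IsUnit a₀ ∧ IsUnit b₁ ∧
      a₁ ∈ CompletingSquares.maxIdeal k d ∧ b₀ ∈ CompletingSquares.maxIdeal k d ∧
      a₂ ∈ CompletingSquares.idealJ k d ∧ b₂ ∈ CompletingSquares.idealJ k d ∧
      G₁ ∈ CompletingSquares.idealJ k d ^ 3 ∧
      x₀ * x₁ + Q + G =
        (a₀ * x₀ + a₁ * x₁ + a₂) * (b₀ * x₀ + b₁ * x₁ + b₂) + Q + G₁) ∧
    (∃ a₀ a₁ a₂ b₀ b₁ b₂ G₁ : MvPowerSeries (Fin (d + 1)) k,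
      IsUnit a₀ ∧ IsUnit a₁ ∧ IsUnit b₀ ∧ IsUnit b₁ ∧
      a₂ ∈ CompletingSquares.idealJ k d ∧ b₂ ∈ CompletingSquares.idealJ k d ∧
      G₁ ∈ CompletingSquares.idealJ k d ^ 3 ∧
      (x₀ ^ 2 + x₀ * x₁ + x₁ ^ 2) + Q + G =
        (a₀ * x₀ + a₁ * x₁ + a₂) * (b₀ * x₀ + b₁ * x₁ + b₂) + Q + G₁) := by
  set i₀ : Fin (d + 1) := ⟨0, Nat.succ_pos d⟩
  set i₁ : Fin (d + 1) := ⟨1, Nat.lt_succ_of_le hd⟩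
  subst hx₀ hx₁
  have hG3 := maxIdeal_pow_le 3 hG
  constructor
  · obtain ⟨u, hu, v, hv, G₁, hG₁, h⟩ := exists_factorization i₀ i₁ rfl rfl
      (L := X i₀) (M := X i₁) (α := 1) (β := 0) (γ := 0) (δ := 1) (by simp) (by simp) hG3
    obtain ⟨p, hp, q, hq, r, hr, rfl⟩ := exists_eq_of_mem_orderIdeal_two i₀ i₁ rfl rfl hu
    obtain ⟨p', hp', q', hq', r', hr', rfl⟩ := exists_eq_of_mem_orderIdeal_two i₀ i₁ rfl rfl hv
    refine ⟨1 + p, q, r, p', 1 + q', r', G₁, isUnit_add_of_mem_orderIdeal (by simp) hp,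
      isUnit_add_of_mem_orderIdeal (by simp) hq', mem_maxIdeal_of_mem_orderIdeal hq,
      mem_maxIdeal_of_mem_orderIdeal hp', hr, hr', hG₁, ?_⟩
    linear_combination h
  · obtain ⟨ω, hω⟩ := exists_sq_add_self_add_one_eq_zero k
    have h2 : (2 : k) = 0 := CharTwo.two_eq_zero
    have hω₀ : ω ≠ 0 := by
      rintro rfl
      simp at hω
    have hω₁ : 1 + ω ≠ 0 := fun h => hω₀ (by
      have h1 : (1 : k) = 0 := by linear_combination hω - ω * h
      exact absurd h1 one_ne_zero)
    have hC : (C ω : MvPowerSeries (Fin (d + 1)) k) ^ 2 + C ω + 1 = 0 := by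
      rw [← map_pow, ← map_add, ← map_one C, ← map_add, hω, map_zero]
    have hC2 : (2 : MvPowerSeries (Fin (d + 1)) k) = 0 := by
      rw [← map_ofNat C 2, h2, map_zero]
    obtain ⟨u, hu, v, hv, G₁, hG₁, h⟩ := exists_factorization i₀ i₁ rfl rfl
      (L := X i₀ + C ω * X i₁) (M := X i₀ + C (1 + ω) * X i₁)
      (α := 1 + ω) (β := ω) (γ := 1) (δ := 1)
      (by
        simp only [MvPowerSeries.smul_eq_C_mul, map_add, map_one]
        linear_combination (-C ω * X i₀ - C ω * X i₁ - C ω ^ 2 * X i₁) * hC2)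
      (by
        simp only [MvPowerSeries.smul_eq_C_mul, map_add, map_one]
        linear_combination (-X i₀ - C ω * X i₁) * hC2) hG3
    obtain ⟨p, hp, q, hq, r, hr, rfl⟩ := exists_eq_of_mem_orderIdeal_two i₀ i₁ rfl rfl hu
    obtain ⟨p', hp', q', hq', r', hr', rfl⟩ := exists_eq_of_mem_orderIdeal_two i₀ i₁ rfl rfl hv
    refine ⟨1 + p, C ω + q, r, 1 + p', C (1 + ω) + q', r', G₁,
      isUnit_add_of_mem_orderIdeal (by simp) hp,
      isUnit_add_of_mem_orderIdeal (by simpa using hω₀) hq,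
      isUnit_add_of_mem_orderIdeal (by simp) hp',
      isUnit_add_of_mem_orderIdeal (by simpa using hω₁) hq', hr, hr', hG₁, ?_⟩
    simp only [map_add, map_one] at h ⊢
    linear_combination h - X i₁ ^ 2 * hC + (X i₁ ^ 2 - C ω * X i₀ * X i₁) * hC2
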